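/- arXiv:2206.09908 — 7 statements merged into one kernel-verified Lean document; each statement's English description precedes it below -/
import Mathlib

section
/- Finite-time unbiasedness of the NEIS estimator (Proposition 2.1, finite-time case). Let U0, U1 : ℝ^d → ℝ be continuous with ∫_{ℝ^d} exp(−U0(x)) dx = 1 and Z1 := ∫_{ℝ^d} exp(−U1(x)) dx < ∞. Let b be an admissible vector field with global flow X and Jacobian factor J, and assume in addition that for every t ∈ ℝ the map x ↦ X t x is continuously differentiable and satisfies det(D_x(X t ·)(x)) = J t x for all x. Then for all real numbers t− < t+ one has Z1 = ∫_{ℝ^d} exp(−U0(x)) · A_{t−,t+}(x) dx, where A_{t−,t+}(x) := ∫_{t−}^{t+} [ exp(−U1(X t x)) · J t x / ( ∫_{t−t+}^{t−t−} exp(−U0(X s x)) · J s x ds ) ] dt. -/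
/-!
Write `ρᵢ = exp (-Uᵢ)` and `M y = ∫ s in -tp..-tm, ρ₀ (X s y) * J s y`. By the cocycle identity
for `J`, the denominator of the estimator at time `t` is `M (X t x) * J t x`, so the Jacobian
factors cancel and the estimator is the orbit average `∫ t in tm..tp, h (X t x)` of the single
function `h = ρ₁ / M`. Integrating it against `ρ₀` and substituting `y = X t x` under the time
integral moves the flow onto `ρ₀`: the result is `∫ M y * h y dy = ∫ ρ₁ y dy`.
-/

open MeasureTheory Filter

noncomputable section

/-- Euclidean state space ℝ^d. -/
abbrev Euc (d : ℕ) := EuclideanSpace ℝ (Fin d)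

/-- Divergence of a vector field: trace of the Fréchet derivative. -/
def vdiv {d : ℕ} (b : Euc d → Euc d) (x : Euc d) : ℝ :=
  LinearMap.trace ℝ (Euc d) (fderiv ℝ b x).toLinearMap

/-- A vector field is admissible if it is C¹ with globally bounded derivative. -/
def Admissible {d : ℕ} (b : Euc d → Euc d) : Prop :=
  ContDiff ℝ 1 b ∧ ∃ C : ℝ, ∀ x, ‖fderiv ℝ b x‖ ≤ C

/-- A global flow of the vector field `b`. -/
def IsGlobalFlow {d : ℕ} (b : Euc d → Euc d) (X : ℝ → Euc d → Euc d) : Prop :=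
  (∀ x, X 0 x = x) ∧
  (∀ t s : ℝ, ∀ x, X (t + s) x = X t (X s x)) ∧
  (∀ x : Euc d, ∀ t : ℝ, HasDerivAt (fun τ => X τ x) (b (X t x)) t)

/-- Jacobian factor of the flow: J t x = exp(∫₀ᵗ div b(X s x) ds). -/
def Jac {d : ℕ} (b : Euc d → Euc d) (X : ℝ → Euc d → Euc d) (t : ℝ) (x : Euc d) : ℝ :=
  Real.exp (∫ s in (0:ℝ)..t, vdiv b (X s x))

section JacobianFlow

variable {α : Type*}

/-- The mass which the weight `ρ`, transported along the orbit of `x` with Jacobian factor `J`,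
gives to the time window from `a` to `b`. -/
def orbitMass (X : ℝ → α → α) (J : ℝ → α → ℝ) (ρ : α → ℝ) (a b : ℝ) (x : α) : ℝ :=
  ∫ s in a..b, ρ (X s x) * J s x

variable {X : ℝ → α → α} {J : ℝ → α → ℝ} {ρ h : α → ℝ} {a b : ℝ}

lemma orbitMass_pos {x : α} (hJ : ∀ s, 0 < J s x) (hρ : ∀ y, 0 < ρ y) (hab : a < b)
    (hint : IntervalIntegrable (fun s => ρ (X s x) * J s x) volume a b) :
    0 < orbitMass X J ρ a b x :=
  intervalIntegral.intervalIntegral_pos_of_pos_on hint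
    (fun s _ => mul_pos (hρ _) (hJ s)) hab

lemma orbitMass_eq_integral_comp_neg (a b : ℝ) (x : α) :
    orbitMass X J ρ (-b) (-a) x = ∫ t in a..b, ρ (X (-t) x) * J (-t) x :=
  (intervalIntegral.integral_comp_neg fun s => ρ (X s x) * J s x).symm

variable [MeasurableSpace α]

/-- A flow on a measure space whose time-`t` maps change the measure `μ` by a positive Jacobian
factor `J t`. The field `measurePreserving` encodes the change of variables
`∫ f (X t x) * J t x ∂μ = ∫ f y ∂μ`. -/
structure IsJacobianFlow (μ : Measure α) (X : ℝ → α → α) (J : ℝ → α → ℝ) : Prop where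
  zero (x : α) : X 0 x = x
  add (s t : ℝ) (x : α) : X (s + t) x = X s (X t x)
  measurable : Measurable fun p : ℝ × α => X p.1 p.2
  jac_pos (t : ℝ) (x : α) : 0 < J t x
  jac_add (s t : ℝ) (x : α) : J (s + t) x = J s (X t x) * J t x
  measurable_jac : Measurable fun p : ℝ × α => J p.1 p.2
  measurePreserving (t : ℝ) :
    MeasurePreserving (X t) (μ.withDensity fun x => ENNReal.ofReal (J t x)) μ

variable {μ : Measure α}

namespace IsJacobianFlow

lemma flow_neg_flow (hX : IsJacobianFlow μ X J) (t : ℝ) (x : α) : X (-t) (X t x) = x := by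
  rw [← hX.add, neg_add_cancel, hX.zero]

lemma flow_flow_neg (hX : IsJacobianFlow μ X J) (t : ℝ) (x : α) : X t (X (-t) x) = x := by
  rw [← hX.add, add_neg_cancel, hX.zero]

lemma jac_zero (hX : IsJacobianFlow μ X J) (x : α) : J 0 x = 1 := by
  have h : J 0 x = J 0 x * J 0 x := by simpa only [add_zero, hX.zero] using hX.jac_add 0 0 x
  exact (mul_eq_left₀ (hX.jac_pos 0 x).ne').1 h.symm

lemma jac_neg_mul_jac (hX : IsJacobianFlow μ X J) (t : ℝ) (x : α) :
    J (-t) (X t x) * J t x = 1 := by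
  rw [← hX.jac_add, neg_add_cancel, hX.jac_zero]

lemma orbitMass_add_right (hX : IsJacobianFlow μ X J) (a b t : ℝ) (x : α) :
    orbitMass X J ρ (a + t) (b + t) x = orbitMass X J ρ a b (X t x) * J t x := by
  simp only [orbitMass, ← intervalIntegral.integral_mul_const]
  rw [← intervalIntegral.integral_comp_add_right]
  simp only [hX.add, hX.jac_add, mul_assoc]

lemma measurable_weight_mul_jac (hX : IsJacobianFlow μ X J) (hρ : Measurable ρ) :
    Measurable fun p : ℝ × α => ρ (X p.1 p.2) * J p.1 p.2 :=
  (hρ.comp hX.measurable).mul hX.measurable_jac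

lemma measurable_orbitMass (hX : IsJacobianFlow μ X J) (hρ : Measurable ρ) (a b : ℝ) :
    Measurable (orbitMass X J ρ a b) := by
  have hm := (hX.measurable_weight_mul_jac hρ).stronglyMeasurable
  exact (hm.integral_prod_left.sub hm.integral_prod_left).measurable

lemma measurableEmbedding_prodMk_flow (hX : IsJacobianFlow μ X J) :
    MeasurableEmbedding fun p : ℝ × α => (p.1, X p.1 p.2) :=
  MeasurableEquiv.measurableEmbedding
    { toFun := fun p => (p.1, X p.1 p.2)
      invFun := fun p => (p.1, X (-p.1) p.2)
      left_inv := fun p => by simp only [hX.flow_neg_flow]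
      right_inv := fun p => by simp only [hX.flow_flow_neg]
      measurable_toFun := measurable_fst.prodMk hX.measurable
      measurable_invFun :=
        measurable_fst.prodMk (hX.measurable.comp (measurable_fst.neg.prodMk measurable_snd)) }

variable [SFinite μ] {ν : Measure ℝ}

lemma measurePreserving_prodMk_flow (hX : IsJacobianFlow μ X J) :
    MeasurePreserving (fun p : ℝ × α => (p.1, X p.1 p.2))
      ((ν.prod μ).withDensity fun p => ENNReal.ofReal (J p.1 p.2)) (ν.prod μ) := by
  have hmeas := hX.measurableEmbedding_prodMk_flow.measurable
  refine ⟨hmeas, Measure.ext fun s hs => ?_⟩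
  have hfiber (t : ℝ) :
      ∫⁻ x in X t ⁻¹' (Prod.mk t ⁻¹' s), ENNReal.ofReal (J t x) ∂μ = μ (Prod.mk t ⁻¹' s) := by
    have hst := measurable_prodMk_left (x := t) hs
    rw [← withDensity_apply _ ((hX.measurePreserving t).measurable hst),
      (hX.measurePreserving t).measure_preimage hst.nullMeasurableSet]
  rw [Measure.map_apply hmeas hs, withDensity_apply _ (hmeas hs), Measure.prod_apply hs,
    ← lintegral_indicator (hmeas hs),
    lintegral_prod _ (hX.measurable_jac.ennreal_ofReal.indicator (hmeas hs)).aemeasurable]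
  refine lintegral_congr fun t => ?_
  rw [← hfiber, ← lintegral_indicator ((hX.measurePreserving t).measurable
    (measurable_prodMk_left hs))]
  rfl

lemma integrable_jac_mul_comp_flow_iff (hX : IsJacobianFlow μ X J) {f : ℝ × α → ℝ} :
    Integrable (fun p : ℝ × α => J p.1 p.2 * f (p.1, X p.1 p.2)) (ν.prod μ) ↔
      Integrable f (ν.prod μ) := by
  rw [← hX.measurePreserving_prodMk_flow.integrable_comp_emb hX.measurableEmbedding_prodMk_flow
      (g := f),
    integrable_withDensity_iff_integrable_smul' hX.measurable_jac.ennreal_ofReal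
      (ae_of_all _ fun _ => ENNReal.ofReal_lt_top)]
  simp only [ENNReal.toReal_ofReal (hX.jac_pos _ _).le, smul_eq_mul, Function.comp_apply]

lemma integral_jac_mul_comp_flow (hX : IsJacobianFlow μ X J) (f : ℝ × α → ℝ) :
    ∫ p, J p.1 p.2 * f (p.1, X p.1 p.2) ∂ν.prod μ = ∫ p, f p ∂ν.prod μ := by
  rw [← hX.measurePreserving_prodMk_flow.integral_comp hX.measurableEmbedding_prodMk_flow f,
    integral_withDensity_eq_integral_toReal_smul hX.measurable_jac.ennreal_ofReal
      (ae_of_all _ fun _ => ENNReal.ofReal_lt_top)]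
  simp only [ENNReal.toReal_ofReal (hX.jac_pos _ _).le, smul_eq_mul]

lemma integral_mul_integral_comp_flow [SFinite ν] (hX : IsJacobianFlow μ X J)
    (hint : Integrable (fun p : ℝ × α => ρ (X (-p.1) p.2) * J (-p.1) p.2 * h p.2) (ν.prod μ)) :
    ∫ x, ρ x * ∫ t, h (X t x) ∂ν ∂μ = ∫ y, (∫ t, ρ (X (-t) y) * J (-t) y ∂ν) * h y ∂μ := by
  set G : ℝ × α → ℝ := fun p => ρ (X (-p.1) p.2) * J (-p.1) p.2 * h p.2 with hG
  have hpull (p : ℝ × α) : J p.1 p.2 * G (p.1, X p.1 p.2) = ρ p.2 * h (X p.1 p.2) := by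
    simp only [hG, hX.flow_neg_flow]
    linear_combination ρ p.2 * h (X p.1 p.2) * hX.jac_neg_mul_jac p.1 p.2
  have hpull_int : Integrable (fun p : ℝ × α => ρ p.2 * h (X p.1 p.2)) (ν.prod μ) := by
    simpa only [hpull] using hX.integrable_jac_mul_comp_flow_iff.2 hint
  calc ∫ x, ρ x * ∫ t, h (X t x) ∂ν ∂μ
      = ∫ x, ∫ t, ρ x * h (X t x) ∂ν ∂μ := by simp only [integral_const_mul]
    _ = ∫ p, ρ p.2 * h (X p.1 p.2) ∂ν.prod μ := (integral_prod_symm _ hpull_int).symm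
    _ = ∫ p, G p ∂ν.prod μ := by simpa only [hpull] using hX.integral_jac_mul_comp_flow G
    _ = ∫ y, ∫ t, ρ (X (-t) y) * J (-t) y * h y ∂ν ∂μ := integral_prod_symm _ hint
    _ = ∫ y, (∫ t, ρ (X (-t) y) * J (-t) y ∂ν) * h y ∂μ := by simp only [integral_mul_const]

lemma integrable_weight_comp_flow_neg_mul (hX : IsJacobianFlow μ X J) (hρ : Measurable ρ)
    (hρ_nonneg : ∀ x, 0 ≤ ρ x) (hab : a ≤ b)
    (hint : ∀ y, IntervalIntegrable (fun s => ρ (X s y) * J s y) volume (-b) (-a))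
    (hh : AEStronglyMeasurable h μ)
    (hmass : Integrable (fun y => orbitMass X J ρ (-b) (-a) y * h y) μ) :
    Integrable (fun p : ℝ × α => ρ (X (-p.1) p.2) * J (-p.1) p.2 * h p.2)
      ((volume.restrict (Set.Ioc a b)).prod μ) := by
  have hweight_nonneg (t : ℝ) (y : α) : 0 ≤ ρ (X t y) * J t y :=
    mul_nonneg (hρ_nonneg _) (hX.jac_pos t y).le
  have hmeas : Measurable fun p : ℝ × α => ρ (X (-p.1) p.2) * J (-p.1) p.2 :=
    (hX.measurable_weight_mul_jac hρ).comp (measurable_fst.neg.prodMk measurable_snd)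
  refine (integrable_prod_iff' (hmeas.aestronglyMeasurable.mul hh.comp_snd)).2
    ⟨ae_of_all _ fun y => ?_, ?_⟩
  · have hneg : IntervalIntegrable (fun t => ρ (X (-t) y) * J (-t) y) volume a b := by
      simpa only [neg_neg] using ((IntervalIntegrable.iff_comp_neg enorm_ne_top).1 (hint y)).symm
    exact hneg.1.mul_const (h y)
  · refine hmass.norm.congr (ae_of_all _ fun y => ?_)
    have hmass_nonneg : 0 ≤ orbitMass X J ρ (-b) (-a) y :=
      intervalIntegral.integral_nonneg (neg_le_neg hab) fun s _ => hweight_nonneg s y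
    calc ‖orbitMass X J ρ (-b) (-a) y * h y‖
        = (∫ t in Set.Ioc a b, ρ (X (-t) y) * J (-t) y) * ‖h y‖ := by
          rw [norm_mul, Real.norm_of_nonneg hmass_nonneg, orbitMass_eq_integral_comp_neg,
            intervalIntegral.integral_of_le hab]
      _ = ∫ t in Set.Ioc a b, ‖ρ (X (-t) y) * J (-t) y * h y‖ := by
          simp only [norm_mul _ (h y), Real.norm_of_nonneg (hweight_nonneg _ _),
            integral_mul_const]

lemma integral_mul_intervalIntegral_comp_flow (hX : IsJacobianFlow μ X J) (hρ : Measurable ρ)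
    (hρ_nonneg : ∀ x, 0 ≤ ρ x) (hab : a ≤ b)
    (hint : ∀ y, IntervalIntegrable (fun s => ρ (X s y) * J s y) volume (-b) (-a))
    (hh : AEStronglyMeasurable h μ)
    (hmass : Integrable (fun y => orbitMass X J ρ (-b) (-a) y * h y) μ) :
    ∫ x, ρ x * (∫ t in a..b, h (X t x)) ∂μ = ∫ y, orbitMass X J ρ (-b) (-a) y * h y ∂μ := by
  simp only [orbitMass_eq_integral_comp_neg, intervalIntegral.integral_of_le hab]
  exact hX.integral_mul_integral_comp_flow
    (hX.integrable_weight_comp_flow_neg_mul hρ hρ_nonneg hab hint hh hmass)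

end IsJacobianFlow

theorem stmt_0_general [SFinite μ] (hX : IsJacobianFlow μ X J) {ρ₀ ρ₁ : α → ℝ}
    (hρ₀ : Measurable ρ₀) (hρ₀_pos : ∀ x, 0 < ρ₀ x) (hρ₁ : Integrable ρ₁ μ)
    {tm tp : ℝ} (htmtp : tm < tp)
    (hint : ∀ y, IntervalIntegrable (fun s => ρ₀ (X s y) * J s y) volume (-tp) (-tm)) :
    ∫ x, ρ₁ x ∂μ =
      ∫ x, ρ₀ x * (∫ t in tm..tp, ρ₁ (X t x) * J t x /
        (∫ s in (t - tp)..(t - tm), ρ₀ (X s x) * J s x)) ∂μ := by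
  set M : α → ℝ := orbitMass X J ρ₀ (-tp) (-tm) with hM
  have hM_pos (y : α) : 0 < M y :=
    orbitMass_pos (fun s => hX.jac_pos s y) hρ₀_pos (neg_lt_neg htmtp) (hint y)
  have hM_mul_div (y : α) : M y * (ρ₁ y / M y) = ρ₁ y := mul_div_cancel₀ _ (hM_pos y).ne'
  have hdenom (t : ℝ) (x : α) :
      (∫ s in (t - tp)..(t - tm), ρ₀ (X s x) * J s x) = M (X t x) * J t x := by
    rw [hM, ← hX.orbitMass_add_right, neg_add_eq_sub, neg_add_eq_sub, orbitMass]
  calc ∫ x, ρ₁ x ∂μ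
      = ∫ y, M y * (ρ₁ y / M y) ∂μ := by simp only [hM_mul_div]
    _ = ∫ x, ρ₀ x * (∫ t in tm..tp, ρ₁ (X t x) / M (X t x)) ∂μ :=
      (hX.integral_mul_intervalIntegral_comp_flow hρ₀ (fun x => (hρ₀_pos x).le) htmtp.le hint
        (hρ₁.1.aemeasurable.div (hX.measurable_orbitMass hρ₀ _ _).aemeasurable).aestronglyMeasurable
        (hρ₁.congr (ae_of_all _ fun y => (hM_mul_div y).symm))).symm
    _ = _ := by simp only [hdenom, mul_div_mul_right _ _ (hX.jac_pos _ _).ne']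

end JacobianFlow

lemma measurePreserving_withDensity_abs_det_fderiv {E : Type*} [NormedAddCommGroup E]
    [NormedSpace ℝ E] [FiniteDimensional ℝ E] [MeasurableSpace E] [BorelSpace E]
    (μ : Measure E) [μ.IsAddHaarMeasure] {f : E → E} (hf : Differentiable ℝ f)
    (hbij : Function.Bijective f) :
    MeasurePreserving f (μ.withDensity fun x => ENNReal.ofReal |(fderiv ℝ f x).det|) μ := by
  refine ⟨hf.continuous.measurable, ?_⟩
  simpa only [Measure.restrict_univ, Set.image_univ_of_surjective hbij.surjective] using
    map_withDensity_abs_det_fderiv_eq_addHaar μ MeasurableSet.univ.nullMeasurableSet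
      (fun x _ => (hf x).hasFDerivAt.hasFDerivWithinAt) hbij.injective.injOn

section GlobalFlow

variable {d : ℕ} {b : Euc d → Euc d} {X : ℝ → Euc d → Euc d}

lemma continuous_vdiv (hb : ContDiff ℝ 1 b) : Continuous (vdiv b) :=
  (LinearMap.continuous_of_finiteDimensional
    ((LinearMap.trace ℝ (Euc d)).comp (ContinuousLinearMap.coeLM ℝ))).comp
    (hb.continuous_fderiv one_ne_zero)

namespace IsGlobalFlow

lemma continuous_time (hX : IsGlobalFlow b X) (x : Euc d) : Continuous fun t => X t x :=
  continuous_iff_continuousAt.2 fun t => (hX.2.2 x t).continuousAt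

lemma bijective (hX : IsGlobalFlow b X) (t : ℝ) : Function.Bijective (X t) :=
  Function.bijective_iff_has_inverse.2 ⟨X (-t),
    fun x => by rw [← hX.2.1, neg_add_cancel, hX.1],
    fun x => by rw [← hX.2.1, add_neg_cancel, hX.1]⟩

lemma intervalIntegrable_vdiv (hX : IsGlobalFlow b X) (hb : ContDiff ℝ 1 b) (x : Euc d)
    (r s : ℝ) : IntervalIntegrable (fun t => vdiv b (X t x)) volume r s :=
  ((continuous_vdiv hb).comp (hX.continuous_time x)).intervalIntegrable r s

lemma continuous_jac_time (hX : IsGlobalFlow b X) (hb : ContDiff ℝ 1 b) (x : Euc d) :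
    Continuous fun t => Jac b X t x :=
  Real.continuous_exp.comp
    (intervalIntegral.continuous_primitive (hX.intervalIntegrable_vdiv hb x) 0)

lemma jac_add (hX : IsGlobalFlow b X) (hb : ContDiff ℝ 1 b) (s t : ℝ) (x : Euc d) :
    Jac b X (s + t) x = Jac b X s (X t x) * Jac b X t x := by
  have hi := hX.intervalIntegrable_vdiv hb x
  have hshift : ∫ r in (0 : ℝ)..s, vdiv b (X r (X t x)) = ∫ r in t..(s + t), vdiv b (X r x) := by
    simpa only [hX.2.1, zero_add] using
      intervalIntegral.integral_comp_add_right (a := 0) (b := s) (fun r => vdiv b (X r x)) t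
  rw [Jac, Jac, Jac, hshift, ← Real.exp_add, add_comm (∫ r in t..(s + t), _),
    intervalIntegral.integral_add_adjacent_intervals (hi _ _) (hi _ _)]

lemma isJacobianFlow (hX : IsGlobalFlow b X) (hb : ContDiff ℝ 1 b)
    (hdiff : ∀ t, ContDiff ℝ 1 (X t))
    (hdet : ∀ t x, (fderiv ℝ (X t) x).det = Jac b X t x) :
    IsJacobianFlow volume X (Jac b X) where
  zero := hX.1
  add := hX.2.1
  measurable := measurable_uncurry_of_continuous_of_measurable hX.continuous_time
    fun t => (hdiff t).continuous.measurable
  jac_pos _ _ := Real.exp_pos _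
  jac_add := hX.jac_add hb
  measurable_jac := by
    refine measurable_uncurry_of_continuous_of_measurable (hX.continuous_jac_time hb) fun t => ?_
    have hcont : Continuous fun x => (fderiv ℝ (X t) x).det :=
      ContinuousLinearMap.continuous_det.comp ((hdiff t).continuous_fderiv one_ne_zero)
    simpa only [hdet] using hcont.measurable
  measurePreserving t := by
    have habs (x : Euc d) : |Jac b X t x| = Jac b X t x := abs_of_pos (Real.exp_pos _)
    simpa only [hdet, habs] using measurePreserving_withDensity_abs_det_fderiv volume
      ((hdiff t).differentiable one_ne_zero) (hX.bijective t)

end IsGlobalFlow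

end GlobalFlow

/-- Finite-time unbiasedness of the NEIS estimator (Proposition 2.1, finite-time case). -/
theorem stmt_0 {d : ℕ} (hd : 0 < d)
    (U0 U1 : Euc d → ℝ) (hU0c : Continuous U0) (hU1c : Continuous U1)
    (hnorm : (∫ x : Euc d, Real.exp (-(U0 x))) = 1)
    (hZ1 : Integrable (fun x : Euc d => Real.exp (-(U1 x))))
    (b : Euc d → Euc d) (hb : Admissible b)
    (X : ℝ → Euc d → Euc d) (hX : IsGlobalFlow b X)
    (hdiff : ∀ t : ℝ, ContDiff ℝ 1 (fun x => X t x))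
    (hdet : ∀ (t : ℝ) (x : Euc d), (fderiv ℝ (fun y => X t y) x).det = Jac b X t x)
    (tm tp : ℝ) (htmtp : tm < tp) :
    (∫ x : Euc d, Real.exp (-(U1 x))) =
      ∫ x : Euc d, Real.exp (-(U0 x)) *
        (∫ t in tm..tp, Real.exp (-(U1 (X t x))) * Jac b X t x /
          (∫ s in (t - tp)..(t - tm), Real.exp (-(U0 (X s x))) * Jac b X s x)) := by
  have hρ₀ : Continuous fun x => Real.exp (-(U0 x)) := by fun_prop
  exact stmt_0_general (hX.isJacobianFlow hb.1 hdiff hdet) hρ₀.measurable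
    (fun _ => Real.exp_pos _) hZ1 htmtp fun y =>
      ((hρ₀.comp (hX.continuous_time y)).mul (hX.continuous_jac_time hb.1 y)).intervalIntegrable _ _
end
end

section
/- Invariance of the NEIS estimator along flowlines (Lemma A.2, equation (2.9)). Let b be an admissible vector field with global flow X and Jacobian factor J, let U0, U1 : ℝ^d → ℝ be continuous, and fix x ∈ ℝ^d such that B(x) := ∫_ℝ F^0_t(x) dt is finite and strictly positive and ∫_ℝ F^1_t(x) dt is finite. Then for every s ∈ ℝ: B(X s x) = B(x) / J s x, and A(X s x) = A(x). -/
open MeasureTheory Filter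

noncomputable section

/-!
The Jacobian factor is the exponential of an integral along the orbit, hence a multiplicative
cocycle: `J (t + s) x = J t (X s x) * J s x`. Therefore moving the base point from `x` to `X s x`
translates the integrand `F t x = exp (-U (X t x)) * J t x` by `s` and divides it by `J s x`.
Lebesgue measure does not see the translation, and the common factor `J s x` cancels in the
estimator.
-/

section Cocycle

/-- `J` is a multiplicative cocycle over the family of self-maps `X`. The acting group is written
additively and `X` is unbundled, so that flows `ℝ → α → α` are covered directly. -/
def IsMulCocycle {G α M : Type*} [Add G] [Mul M] (X : G → α → α) (J : G → α → M) : Prop :=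
  ∀ g h x, J (g + h) x = J g (X h x) * J h x

namespace IsMulCocycle

variable {G α 𝕜 : Type*} {X : G → α → α} {J : G → α → 𝕜} {h : G} {x : α}

lemma mul_eq_div [Add G] [Field 𝕜] (hJ : IsMulCocycle X J)
    (hX : ∀ g h x, X (g + h) x = X g (X h x)) (hne : J h x ≠ 0) (f : α → 𝕜) (g : G) :
    f (X g (X h x)) * J g (X h x) = f (X (g + h) x) * J (g + h) x / J h x := by
  rw [hJ, hX, ← mul_assoc, mul_div_cancel_right₀ _ hne]

variable [AddGroup G] [MeasurableSpace G] [MeasurableAdd G] {μ : Measure G}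
  [μ.IsAddRightInvariant] [RCLike 𝕜] {f : α → 𝕜}

lemma integrable_orbit (hJ : IsMulCocycle X J) (hX : ∀ g h x, X (g + h) x = X g (X h x))
    (hne : J h x ≠ 0) (hf : Integrable (fun g => f (X g x) * J g x) μ) :
    Integrable (fun g => f (X g (X h x)) * J g (X h x)) μ := by
  simp_rw [hJ.mul_eq_div hX hne]
  exact (hf.comp_add_right h).div_const _

lemma integral_orbit (hJ : IsMulCocycle X J) (hX : ∀ g h x, X (g + h) x = X g (X h x))
    (hne : J h x ≠ 0) :
    ∫ g, f (X g (X h x)) * J g (X h x) ∂μ = (∫ g, f (X g x) * J g x ∂μ) / J h x := by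
  simp_rw [hJ.mul_eq_div hX hne]
  rw [integral_div, integral_add_right_eq_self (fun g => f (X g x) * J g x)]

end IsMulCocycle

lemma intervalIntegral_orbit_add {α E : Type*} [NormedAddCommGroup E] [NormedSpace ℝ E]
    {X : ℝ → α → α} {a : α → E} {x : α} (hX : ∀ t s, X (t + s) x = X t (X s x))
    (ha : ∀ t s, IntervalIntegrable (fun r => a (X r x)) volume t s) (t s : ℝ) :
    ∫ r in (0 : ℝ)..(t + s), a (X r x) =
      (∫ r in (0 : ℝ)..s, a (X r x)) + ∫ r in (0 : ℝ)..t, a (X r (X s x)) := by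
  have hshift : ∫ r in (0 : ℝ)..t, a (X r (X s x)) = ∫ r in s..(t + s), a (X r x) := by
    simp_rw [← hX]
    rw [intervalIntegral.integral_comp_add_right (fun r => a (X r x)), zero_add]
  rw [hshift, intervalIntegral.integral_add_adjacent_intervals (ha 0 s) (ha s (t + s))]

end Cocycle

section VectorField

variable {d : ℕ} {b : Euc d → Euc d} {X : ℝ → Euc d → Euc d}

lemma IsGlobalFlow.continuous_orbit (hX : IsGlobalFlow b X) (x : Euc d) :
    Continuous fun t => X t x :=
  continuous_iff_continuousAt.2 fun t => (hX.2.2 x t).continuousAt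

lemma jac_ne_zero (b : Euc d → Euc d) (X : ℝ → Euc d → Euc d) (t : ℝ) (x : Euc d) :
    Jac b X t x ≠ 0 :=
  Real.exp_ne_zero _

lemma IsGlobalFlow.isMulCocycle_jac (hX : IsGlobalFlow b X) (hb : ContDiff ℝ 1 b) :
    IsMulCocycle X (Jac b X) := by
  intro t s x
  have hdiv : Continuous fun r => vdiv b (X r x) :=
    (continuous_vdiv hb).comp (hX.continuous_orbit x)
  simp only [Jac]
  rw [intervalIntegral_orbit_add (fun t s => hX.2.1 t s x) hdiv.intervalIntegrable, Real.exp_add,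
    mul_comm]

end VectorField

theorem stmt_3_general {d : ℕ} {b : Euc d → Euc d} (hb : ContDiff ℝ 1 b)
    {X : ℝ → Euc d → Euc d} (hX : IsGlobalFlow b X) {U0 U1 : Euc d → ℝ} {x : Euc d}
    (hF0 : Integrable (fun t : ℝ => Real.exp (-(U0 (X t x))) * Jac b X t x))
    (hF1 : Integrable (fun t : ℝ => Real.exp (-(U1 (X t x))) * Jac b X t x)) (s : ℝ) :
    Integrable (fun t : ℝ => Real.exp (-(U0 (X t (X s x)))) * Jac b X t (X s x)) ∧
      Integrable (fun t : ℝ => Real.exp (-(U1 (X t (X s x)))) * Jac b X t (X s x)) ∧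
      (∫ t : ℝ, Real.exp (-(U0 (X t (X s x)))) * Jac b X t (X s x)) =
        (∫ t : ℝ, Real.exp (-(U0 (X t x))) * Jac b X t x) / Jac b X s x ∧
      (∫ t : ℝ, Real.exp (-(U1 (X t (X s x)))) * Jac b X t (X s x)) /
          (∫ t : ℝ, Real.exp (-(U0 (X t (X s x)))) * Jac b X t (X s x)) =
        (∫ t : ℝ, Real.exp (-(U1 (X t x))) * Jac b X t x) /
          (∫ t : ℝ, Real.exp (-(U0 (X t x))) * Jac b X t x) := by
  have hJ : IsMulCocycle X (Jac b X) := hX.isMulCocycle_jac hb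
  have hne : Jac b X s x ≠ 0 := jac_ne_zero b X s x
  have hintegral (U : Euc d → ℝ) :
      (∫ t : ℝ, Real.exp (-(U (X t (X s x)))) * Jac b X t (X s x)) =
        (∫ t : ℝ, Real.exp (-(U (X t x))) * Jac b X t x) / Jac b X s x :=
    hJ.integral_orbit (f := fun y => Real.exp (-(U y))) hX.2.1 hne
  refine ⟨hJ.integrable_orbit (f := fun y => Real.exp (-(U0 y))) hX.2.1 hne hF0,
    hJ.integrable_orbit (f := fun y => Real.exp (-(U1 y))) hX.2.1 hne hF1, hintegral U0, ?_⟩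
  rw [hintegral U0, hintegral U1, div_div_div_cancel_right₀ hne]

/-- Invariance of the NEIS estimator along flowlines (Lemma A.2, equation (2.9)). -/
theorem stmt_3 {d : ℕ} (hd : 0 < d)
    (b : Euc d → Euc d) (hb : Admissible b)
    (X : ℝ → Euc d → Euc d) (hX : IsGlobalFlow b X)
    (U0 U1 : Euc d → ℝ) (hU0c : Continuous U0) (hU1c : Continuous U1)
    (x : Euc d)
    (hB : Integrable (fun t : ℝ => Real.exp (-(U0 (X t x))) * Jac b X t x))
    (hBpos : 0 < ∫ t : ℝ, Real.exp (-(U0 (X t x))) * Jac b X t x)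
    (hF1 : Integrable (fun t : ℝ => Real.exp (-(U1 (X t x))) * Jac b X t x)) :
    ∀ s : ℝ,
      (∫ t : ℝ, Real.exp (-(U0 (X t (X s x)))) * Jac b X t (X s x)) =
        (∫ t : ℝ, Real.exp (-(U0 (X t x))) * Jac b X t x) / Jac b X s x ∧
      (∫ t : ℝ, Real.exp (-(U1 (X t (X s x)))) * Jac b X t (X s x)) /
          (∫ t : ℝ, Real.exp (-(U0 (X t (X s x)))) * Jac b X t (X s x)) =
        (∫ t : ℝ, Real.exp (-(U1 (X t x))) * Jac b X t x) /
          (∫ t : ℝ, Real.exp (-(U0 (X t x))) * Jac b X t x) := by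
  exact fun s => (stmt_3_general hb.1 hX hB hF1 s).2.2
end
end

section
/- Time-rescaling identity (lemma in the proof of Proposition 2.2). Let b be an admissible vector field with global flow X, let α : ℝ^d → ℝ be continuously differentiable with inf_x α(x) > 0, and suppose the vector field α·b (pointwise scalar multiplication) is admissible with global flow Y. Let g : ℝ^d → ℝ be nonnegative and continuous. Then for every x ∈ ℝ^d, with both sides interpreted as Lebesgue integrals of nonnegative functions (values in [0,∞]): ∫_ℝ g(Y t x) · exp(∫_0^t div(α·b)(Y s x) ds) dt = (1/α(x)) · ∫_ℝ g(X t x) · exp(∫_0^t div b(X s x) ds) dt. -/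
/-!
Let `γ` and `η` be integral curves of `b` and `α • b` with the same starting point, and let `τ` be
the clock `τ t = ∫₀ᵗ α (η s) ds`. Both `η` and `γ ∘ τ` solve `z' = α (η t) • b z`, so `η = γ ∘ τ`.
Substituting `u = τ s` in `∫₀ᵗ 1 ds` gives `∫₀^{τ t} du / α (γ u) = t` for every real `t`; as the
left side is an injective function of `τ t`, the clock runs through all of `ℝ`, even when `α` is not
bounded away from `0`.

Along `η` the extra term in `div (α b) = α div b + Dα · b` is the time derivative of `log α`, so
the exponential weight of `α • b` at time `t` is `τ' t / α (η 0)` times the weight of `b` at time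
`τ t`. The identity is then the change of variables `u = τ t`.
-/

open MeasureTheory Filter

noncomputable section

theorem lintegral_eq_lintegral_deriv_mul_comp {f f' : ℝ → ℝ} (hf' : ∀ t, HasDerivAt f (f' t) t)
    (hf : Monotone f) (hsurj : Function.Surjective f) (u : ℝ → ENNReal) :
    ∫⁻ t, u t = ∫⁻ t, ENNReal.ofReal (f' t) * u (f t) := by
  have h := lintegral_image_eq_lintegral_deriv_mul_of_monotoneOn MeasurableSet.univ
    (fun t _ ↦ (hf' t).hasDerivWithinAt) (hf.monotoneOn _) u
  rwa [Set.image_univ, hsurj.range_eq, Measure.restrict_univ] at h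

section TimeIntegral

variable {E : Type*} {α f : E → ℝ} {γ η : ℝ → E}

/-- The integral `∫₀ᵗ f (γ s) ds` of a function over time along a curve. It serves both as the
clock `τ` (for `f = α`) and as the logarithm of the Jacobian factor (for `f = div b`). -/
def timeIntegral (f : E → ℝ) (γ : ℝ → E) (t : ℝ) : ℝ :=
  ∫ s in (0 : ℝ)..t, f (γ s)

@[simp]
theorem timeIntegral_zero (f : E → ℝ) (γ : ℝ → E) : timeIntegral f γ 0 = 0 :=
  intervalIntegral.integral_same

theorem hasDerivAt_timeIntegral (hf : Continuous fun t ↦ f (γ t)) (t : ℝ) :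
    HasDerivAt (timeIntegral f γ) (f (γ t)) t :=
  (hf.integral_hasStrictDerivAt 0 t).hasDerivAt

theorem strictMono_timeIntegral (hf : Continuous fun t ↦ f (γ t)) (hpos : ∀ t, 0 < f (γ t)) :
    StrictMono (timeIntegral f γ) :=
  strictMono_of_deriv_pos fun t ↦ (hasDerivAt_timeIntegral hf t).deriv ▸ hpos t

theorem timeIntegral_mul_comp (hα : Continuous fun t ↦ α (η t))
    (hf : Continuous fun t ↦ f (γ t)) (hη : ∀ t, η t = γ (timeIntegral α η t)) (t : ℝ) :
    timeIntegral (fun x ↦ α x * f x) η t = timeIntegral f γ (timeIntegral α η t) := by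
  calc timeIntegral (fun x ↦ α x * f x) η t
      = ∫ s in (0 : ℝ)..t, f (γ (timeIntegral α η s)) * α (η s) :=
        intervalIntegral.integral_congr fun s _ ↦ by simp only [← hη s, mul_comm (α (η s))]
    _ = ∫ u in timeIntegral α η 0..timeIntegral α η t, f (γ u) :=
        intervalIntegral.integral_comp_mul_deriv (fun s _ ↦ hasDerivAt_timeIntegral hα s)
          hα.continuousOn hf
    _ = timeIntegral f γ (timeIntegral α η t) := by rw [timeIntegral_zero, ← timeIntegral]

theorem surjective_timeIntegral (hαγ : Continuous fun t ↦ α (γ t)) (hpos : ∀ t, 0 < α (γ t))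
    (hαη : Continuous fun t ↦ α (η t)) (hη : ∀ t, η t = γ (timeIntegral α η t)) :
    Function.Surjective (timeIntegral α η) := by
  have hinv : Continuous fun t ↦ (α (γ t))⁻¹ := hαγ.inv₀ fun t ↦ (hpos t).ne'
  have hleft (t : ℝ) : timeIntegral (fun x ↦ (α x)⁻¹) γ (timeIntegral α η t) = t := by
    have hone (s : ℝ) : α (η s) * (α (η s))⁻¹ = 1 := mul_inv_cancel₀ (hη s ▸ (hpos _).ne')
    rw [← timeIntegral_mul_comp hαη hinv hη]
    simp [timeIntegral, hone]
  have hinj := (strictMono_timeIntegral hinv fun t ↦ inv_pos.2 (hpos t)).injective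
  exact fun u ↦ ⟨_, hinj (hleft (timeIntegral (fun x ↦ (α x)⁻¹) γ u))⟩

end TimeIntegral

section TimeChange

variable {E : Type*} [NormedAddCommGroup E] [NormedSpace ℝ E]
  {a : ℝ → ℝ} {b : E → E} {α : E → ℝ} {γ η : ℝ → E}

theorem isIntegralCurve_smul_unique {t₀ : ℝ} (ha : Continuous a) (hb : LocallyLipschitz b)
    (hγ : IsIntegralCurve γ fun t x ↦ a t • b x) (hη : IsIntegralCurve η fun t x ↦ a t • b x)
    (h₀ : γ t₀ = η t₀) : γ = η := by
  ext t
  obtain ⟨A, B, ht, ht₀⟩ : ∃ A B, t ∈ Set.Ioo A B ∧ t₀ ∈ Set.Ioo A B :=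
    ⟨min t t₀ - 1, max t t₀ + 1, by grind, by grind⟩
  obtain ⟨M, hM⟩ := (isCompact_Icc (a := A) (b := B)).exists_bound_of_continuousOn ha.continuousOn
  obtain ⟨C, hC⟩ := hb.locallyLipschitzOn.exists_lipschitzOnWith_of_compact
    ((isCompact_Icc (a := A) (b := B)).image hγ.continuous |>.union
      (isCompact_Icc.image hη.continuous))
  have hLip (s : ℝ) (hs : s ∈ Set.Ioo A B) : LipschitzOnWith (M.toNNReal * C) (fun x ↦ a s • b x)
      (γ '' Set.Icc A B ∪ η '' Set.Icc A B) := by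
    have hMs : ‖a s‖₊ ≤ M.toNNReal :=
      NNReal.coe_le_coe.1 ((hM s (Set.Ioo_subset_Icc_self hs)).trans (Real.le_coe_toNNReal M))
    exact ((lipschitzWith_smul (a s)).comp_lipschitzOnWith hC).weaken (by gcongr)
  exact ODE_solution_unique_of_mem_Ioo hLip ht₀
    (fun s hs ↦ ⟨hγ s, .inl (Set.mem_image_of_mem γ (Set.Ioo_subset_Icc_self hs))⟩)
    (fun s hs ↦ ⟨hη s, .inr (Set.mem_image_of_mem η (Set.Ioo_subset_Icc_self hs))⟩) h₀ ht

theorem integralCurve_smul_eq_comp_timeIntegral (hb : LocallyLipschitz b)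
    (hα : Continuous α) (hγ : IsIntegralCurve γ fun _ ↦ b)
    (hη : IsIntegralCurve η fun _ x ↦ α x • b x) (h₀ : γ 0 = η 0) (t : ℝ) :
    η t = γ (timeIntegral α η t) := by
  have hαη : Continuous fun t ↦ α (η t) := hα.comp hη.continuous
  have hγτ : IsIntegralCurve (γ ∘ timeIntegral α η) fun t x ↦ α (η t) • b x :=
    fun t ↦ (hγ _).scomp t (hasDerivAt_timeIntegral hαη t)
  exact congrFun (isIntegralCurve_smul_unique (t₀ := 0) hαη hb hη hγτ (by simp [h₀])) t

theorem timeIntegral_fderiv_apply_eq_log_sub_log (hb : Continuous b)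
    (hα : ContDiff ℝ 1 α) (hη : IsIntegralCurve η fun _ x ↦ α x • b x)
    (hne : ∀ t, α (η t) ≠ 0) (t : ℝ) :
    timeIntegral (fun x ↦ fderiv ℝ α x (b x)) η t = Real.log (α (η t)) - Real.log (α (η 0)) := by
  have hlog (s : ℝ) : HasDerivAt (fun s ↦ Real.log (α (η s))) (fderiv ℝ α (η s) (b (η s))) s := by
    have hα' := (hα.differentiable one_ne_zero (η s)).hasFDerivAt.comp_hasDerivAt s (hη s)
    refine (hα'.log (hne s)).congr_deriv ?_
    rw [map_smul, smul_eq_mul, Function.comp_apply, mul_div_cancel_left₀ _ (hne s)]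
  have hcont : Continuous fun x ↦ fderiv ℝ α x (b x) :=
    (hα.continuous_fderiv one_ne_zero).clm_apply hb
  exact intervalIntegral.integral_eq_sub_of_hasDerivAt (fun s _ ↦ hlog s)
    ((hcont.comp hη.continuous).intervalIntegrable 0 t)

end TimeChange

section Divergence

/-- The divergence of a vector field on a finite-dimensional space, as the trace of its derivative.
For `E = Euc d` it is definitionally `vdiv`. -/
def divergence {E : Type*} [NormedAddCommGroup E] [NormedSpace ℝ E] (b : E → E) (x : E) : ℝ :=
  LinearMap.trace ℝ E (fderiv ℝ b x).toLinearMap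

variable {E : Type*} [NormedAddCommGroup E] [NormedSpace ℝ E] [FiniteDimensional ℝ E]
  {b : E → E} {α : E → ℝ} {γ η : ℝ → E}

theorem continuous_divergence (hb : ContDiff ℝ 1 b) : Continuous (divergence b) := by
  have htrace : Continuous fun L : E →L[ℝ] E ↦ LinearMap.trace ℝ E L.toLinearMap :=
    LinearMap.continuous_of_finiteDimensional
      ((LinearMap.trace ℝ E).comp (ContinuousLinearMap.coeLM ℝ))
  exact htrace.comp (hb.continuous_fderiv one_ne_zero)

theorem divergence_smul {x : E} (hα : DifferentiableAt ℝ α x) (hb : DifferentiableAt ℝ b x) :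
    divergence (fun y ↦ α y • b y) x = α x * divergence b x + fderiv ℝ α x (b x) := by
  rw [divergence, fderiv_fun_smul hα hb, ContinuousLinearMap.toLinearMap_add, map_add,
    ContinuousLinearMap.toLinearMap_smul, map_smul, smul_eq_mul, divergence]
  exact congrArg _ (LinearMap.trace_smulRight (fderiv ℝ α x).toLinearMap (b x))

theorem exp_timeIntegral_divergence_smul (hb : ContDiff ℝ 1 b) (hα : ContDiff ℝ 1 α)
    (hpos : ∀ t, 0 < α (η t)) (hγ : Continuous γ)
    (hη : IsIntegralCurve η fun _ x ↦ α x • b x) (hηγ : ∀ t, η t = γ (timeIntegral α η t)) (t : ℝ) :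
    Real.exp (timeIntegral (divergence fun x ↦ α x • b x) η t) =
      α (η t) / α (η 0) * Real.exp (timeIntegral (divergence b) γ (timeIntegral α η t)) := by
  have hdiv := continuous_divergence hb
  have hαdiv : Continuous fun s ↦ α (η s) * divergence b (η s) :=
    (hα.continuous.mul hdiv).comp hη.continuous
  have hDα : Continuous fun s ↦ fderiv ℝ α (η s) (b (η s)) :=
    ((hα.continuous_fderiv one_ne_zero).clm_apply hb.continuous).comp hη.continuous
  have hsplit : timeIntegral (divergence fun x ↦ α x • b x) η t =
      timeIntegral (fun x ↦ α x * divergence b x) η t +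
        timeIntegral (fun x ↦ fderiv ℝ α x (b x)) η t := by
    simp only [timeIntegral, divergence_smul (hα.differentiable one_ne_zero _)
      (hb.differentiable one_ne_zero _)]
    exact intervalIntegral.integral_add (hαdiv.intervalIntegrable 0 t)
      (hDα.intervalIntegrable 0 t)
  have hclock := timeIntegral_mul_comp (f := divergence b) (hα.continuous.comp hη.continuous)
    (hdiv.comp hγ) hηγ t
  rw [hsplit, hclock,
    timeIntegral_fderiv_apply_eq_log_sub_log hb.continuous hα hη fun s ↦ (hpos s).ne',
    Real.exp_add, Real.exp_sub, Real.exp_log (hpos t), Real.exp_log (hpos 0), mul_comm]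

theorem stmt_4_general (hb : ContDiff ℝ 1 b) (hα : ContDiff ℝ 1 α)
    (hpos : ∀ t, 0 < α (γ t)) (hγ : IsIntegralCurve γ fun _ ↦ b)
    (hη : IsIntegralCurve η fun _ x ↦ α x • b x) (h₀ : γ 0 = η 0) (g : E → ENNReal) :
    ∫⁻ t, g (η t) *
        ENNReal.ofReal (Real.exp (∫ s in (0 : ℝ)..t, divergence (fun x ↦ α x • b x) (η s))) =
      ENNReal.ofReal (1 / α (η 0)) *
        ∫⁻ t, g (γ t) * ENNReal.ofReal (Real.exp (∫ s in (0 : ℝ)..t, divergence b (γ s))) := by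
  have hαη : Continuous fun t ↦ α (η t) := hα.continuous.comp hη.continuous
  have hηγ := integralCurve_smul_eq_comp_timeIntegral hb.locallyLipschitz hα.continuous hγ hη h₀
  have hposη (t : ℝ) : 0 < α (η t) := hηγ t ▸ hpos _
  have hαγ : Continuous fun t ↦ α (γ t) := hα.continuous.comp hγ.continuous
  have hsurj := surjective_timeIntegral hαγ hpos hαη hηγ
  let F (t : ℝ) : ENNReal :=
    g (γ t) * ENNReal.ofReal (Real.exp (timeIntegral (divergence b) γ t))
  have hweight (t : ℝ) :
      g (η t) *
          ENNReal.ofReal (Real.exp (timeIntegral (divergence fun x ↦ α x • b x) η t)) =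
        ENNReal.ofReal (1 / α (η 0)) *
          (ENNReal.ofReal (α (η t)) * F (timeIntegral α η t)) := by
    simp only [F, ← hηγ]
    rw [exp_timeIntegral_divergence_smul hb hα hposη hγ.continuous hη hηγ, div_eq_mul_one_div,
      ENNReal.ofReal_mul (mul_nonneg (hposη t).le (one_div_pos.2 (hposη 0)).le),
      ENNReal.ofReal_mul (hposη t).le]
    ring
  calc
    _ = ∫⁻ t, ENNReal.ofReal (1 / α (η 0)) *
          (ENNReal.ofReal (α (η t)) * F (timeIntegral α η t)) := lintegral_congr hweight
    _ = ENNReal.ofReal (1 / α (η 0)) *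
          ∫⁻ t, ENNReal.ofReal (α (η t)) * F (timeIntegral α η t) :=
        lintegral_const_mul' _ _ ENNReal.ofReal_ne_top
    _ = ENNReal.ofReal (1 / α (η 0)) * ∫⁻ t, F t := by
        rw [lintegral_eq_lintegral_deriv_mul_comp (hasDerivAt_timeIntegral hαη)
          (strictMono_timeIntegral hαη hposη).monotone hsurj F]

end Divergence

theorem IsGlobalFlow.isIntegralCurve {d : ℕ} {b : Euc d → Euc d} {X : ℝ → Euc d → Euc d}
    (hX : IsGlobalFlow b X) (x : Euc d) : IsIntegralCurve (fun t ↦ X t x) fun _ ↦ b :=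
  hX.2.2 x

/-- Time-rescaling identity (lemma in the proof of Proposition 2.2). -/
theorem stmt_4 {d : ℕ} (hd : 0 < d)
    (b : Euc d → Euc d) (hb : Admissible b)
    (X : ℝ → Euc d → Euc d) (hX : IsGlobalFlow b X)
    (α : Euc d → ℝ) (hα : ContDiff ℝ 1 α)
    (hαpos : ∃ c : ℝ, 0 < c ∧ ∀ x, c ≤ α x)
    (hab : Admissible (fun y => α y • b y))
    (Y : ℝ → Euc d → Euc d) (hY : IsGlobalFlow (fun y => α y • b y) Y)
    (g : Euc d → ℝ) (hgc : Continuous g) (hgn : ∀ x, 0 ≤ g x) :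
    ∀ x : Euc d,
      (∫⁻ t : ℝ, ENNReal.ofReal
          (g (Y t x) * Real.exp (∫ s in (0:ℝ)..t, vdiv (fun y => α y • b y) (Y s x)))) =
        ENNReal.ofReal (1 / α x) *
          ∫⁻ t : ℝ, ENNReal.ofReal
            (g (X t x) * Real.exp (∫ s in (0:ℝ)..t, vdiv b (X s x))) := by
  obtain ⟨c, hc, hcα⟩ := hαpos
  intro x
  simpa only [ENNReal.ofReal_mul (hgn _), hY.1] using!
    stmt_4_general hb.1 hα (fun t ↦ hc.trans_le (hcα (X t x))) (hX.isIntegralCurve x)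
      (hY.isIntegralCurve x) ((hX.1 x).trans (hY.1 x).symm) fun y ↦ ENNReal.ofReal (g y)
end
end

section
/- Decay of the velocity along gradient flowlines (Lemma D.1). Let V : ℝ^d → ℝ be twice continuously differentiable, bounded, and with sup_x ‖D²V(x)‖ < ∞ (operator norm of the second derivative). Let X be a global flow of the gradient field ∇V. Then for every x ∈ ℝ^d, ‖∇V(X t x)‖ → 0 as t → +∞ and ‖∇V(X t x)‖ → 0 as t → −∞. -/
/-!
Write `v t = ‖∇V (γ t)‖` for the speed of a flowline `γ`. Two trajectories of a `K`-Lipschitz field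
separate at most like `exp (K t)`; comparing `γ` with its own time shifts gives
`v t ≤ exp (K (t - s)) v s` for `s ≤ t`. As `V ∘ γ` has derivative `v ^ 2`, the increment of `V ∘ γ`
over `[t - 1, t]` controls `v t ^ 2` up to the factor `exp (2 K)`. But `V ∘ γ` is monotone and
bounded, so it converges at both ends and these increments tend to zero.
-/

open MeasureTheory Filter

noncomputable section

open scoped NNReal Topology

section IntegralCurve

variable {E : Type*} [NormedAddCommGroup E] [NormedSpace ℝ E] {b : E → E} {K : ℝ≥0} {γ : ℝ → E}
  {s t : ℝ}

lemma dist_add_right_le_of_isIntegralCurve (hb : LipschitzWith K b)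
    (hγ : IsIntegralCurve γ fun _ => b) (hst : s ≤ t) (r : ℝ) :
    dist (γ (t + r)) (γ t) ≤ dist (γ (s + r)) (γ s) * Real.exp (K * (t - s)) := by
  have hshift : IsIntegralCurve (fun u => γ (u + r)) fun _ => b := hγ.comp_add r
  exact dist_le_of_trajectories_ODE (fun _ => hb)
    (hshift.isIntegralCurveOn _).continuousOn (fun u _ => (hshift u).hasDerivWithinAt)
    (hγ.isIntegralCurveOn _).continuousOn (fun u _ => (hγ u).hasDerivWithinAt)
    le_rfl t (Set.right_mem_Icc.2 hst)

lemma norm_velocity_le_mul_exp_of_isIntegralCurve (hb : LipschitzWith K b)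
    (hγ : IsIntegralCurve γ fun _ => b) (hst : s ≤ t) :
    ‖b (γ t)‖ ≤ ‖b (γ s)‖ * Real.exp (K * (t - s)) := by
  refine le_of_tendsto_of_tendsto' (hγ t).tendsto_slope_zero.norm
    ((hγ s).tendsto_slope_zero.norm.mul_const _) fun r => ?_
  rw [norm_smul, norm_smul, mul_assoc, ← dist_eq_norm, ← dist_eq_norm]
  gcongr
  exact dist_add_right_le_of_isIntegralCurve hb hγ hst r

end IntegralCurve

section GradientFlow

variable {F : Type*} [NormedAddCommGroup F] [InnerProductSpace ℝ F] [CompleteSpace F] {V : F → ℝ}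
  {γ : ℝ → F} {K : ℝ≥0}

lemma contDiff_gradient {m n : WithTop ℕ∞} (hV : ContDiff ℝ n V) (hmn : m + 1 ≤ n) :
    ContDiff ℝ m (gradient V) :=
  (InnerProductSpace.toDual ℝ F).symm.contDiff.comp (hV.fderiv_right hmn)

lemma lipschitzWith_gradient_of_norm_fderiv_le (hV : ContDiff ℝ 2 V) {C : ℝ}
    (hC : ∀ x, ‖fderiv ℝ (gradient V) x‖ ≤ C) : LipschitzWith C.toNNReal (gradient V) :=
  have hgrad : ContDiff ℝ 1 (gradient V) := contDiff_gradient hV one_add_one_eq_two.le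
  lipschitzWith_of_nnnorm_fderiv_le (hgrad.differentiable one_ne_zero)
    fun x => NNReal.le_toNNReal_of_coe_le (hC x)

lemma hasDerivAt_comp_integralCurve_gradient (hV : Differentiable ℝ V)
    (hγ : IsIntegralCurve γ fun _ => gradient V) (t : ℝ) :
    HasDerivAt (fun u => V (γ u)) (‖gradient V (γ t)‖ ^ 2) t := by
  have hcomp := (hV (γ t)).hasFDerivAt.comp_hasDerivAt t (hγ t)
  rwa [← inner_gradient_left, real_inner_self_eq_norm_sq] at hcomp

lemma monotone_comp_integralCurve_gradient (hV : Differentiable ℝ V)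
    (hγ : IsIntegralCurve γ fun _ => gradient V) :
    Monotone fun t => V (γ t) :=
  monotone_of_hasDerivAt_nonneg (hasDerivAt_comp_integralCurve_gradient hV hγ) fun _ => sq_nonneg _

lemma sq_norm_gradient_le_slope_mul_exp (hV : Differentiable ℝ V)
    (hLip : LipschitzWith K (gradient V)) (hγ : IsIntegralCurve γ fun _ => gradient V)
    {s t : ℝ} (hst : s < t) :
    ‖gradient V (γ t)‖ ^ 2 ≤
      (V (γ t) - V (γ s)) / (t - s) * Real.exp (K * (t - s)) ^ 2 := by
  have hderiv := hasDerivAt_comp_integralCurve_gradient hV hγ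
  obtain ⟨c, ⟨hsc, hct⟩, hslope⟩ := exists_hasDerivAt_eq_slope _ _ hst
    (fun u _ => (hderiv u).continuousAt.continuousWithinAt) fun u _ => hderiv u
  calc ‖gradient V (γ t)‖ ^ 2
      ≤ (‖gradient V (γ c)‖ * Real.exp (K * (t - c))) ^ 2 := by
        gcongr
        exact norm_velocity_le_mul_exp_of_isIntegralCurve hLip hγ hct.le
    _ ≤ (‖gradient V (γ c)‖ * Real.exp (K * (t - s))) ^ 2 := by gcongr
    _ = (V (γ t) - V (γ s)) / (t - s) * Real.exp (K * (t - s)) ^ 2 := by rw [mul_pow, hslope]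

lemma tendsto_norm_gradient_of_tendsto_comp (hV : Differentiable ℝ V)
    (hLip : LipschitzWith K (gradient V)) (hγ : IsIntegralCurve γ fun _ => gradient V)
    {l : Filter ℝ} (hl : Tendsto (fun t => t - 1) l l) {a : ℝ}
    (hlim : Tendsto (fun t => V (γ t)) l (𝓝 a)) :
    Tendsto (fun t => ‖gradient V (γ t)‖) l (𝓝 0) := by
  have hincr : Tendsto (fun t => (V (γ t) - V (γ (t - 1))) * Real.exp K ^ 2) l (𝓝 0) := by
    simpa using (hlim.sub (hlim.comp hl)).mul_const (Real.exp K ^ 2)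
  have hsq : Tendsto (fun t => ‖gradient V (γ t)‖ ^ 2) l (𝓝 0) :=
    squeeze_zero (fun _ => sq_nonneg _) (fun t => by
      simpa using sq_norm_gradient_le_slope_mul_exp hV hLip hγ (sub_one_lt t)) hincr
  simpa using hsq.sqrt

theorem stmt_7_general (hV : Differentiable ℝ V) (hLip : LipschitzWith K (gradient V))
    (hγ : IsIntegralCurve γ fun _ => gradient V)
    (hAbove : BddAbove (Set.range fun t => V (γ t)))
    (hBelow : BddBelow (Set.range fun t => V (γ t))) :
    Tendsto (fun t => ‖gradient V (γ t)‖) atTop (𝓝 0) ∧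
      Tendsto (fun t => ‖gradient V (γ t)‖) atBot (𝓝 0) :=
  have hmono := monotone_comp_integralCurve_gradient hV hγ
  ⟨tendsto_norm_gradient_of_tendsto_comp hV hLip hγ
      (tendsto_atTop_add_const_right _ (-1) tendsto_id) (tendsto_atTop_ciSup hmono hAbove),
    tendsto_norm_gradient_of_tendsto_comp hV hLip hγ
      (tendsto_atBot_add_const_right _ (-1) tendsto_id) (tendsto_atBot_ciInf hmono hBelow)⟩

end GradientFlow

/-- Decay of the velocity along gradient flowlines (Lemma D.1). -/
theorem stmt_7 {d : ℕ} (hd : 0 < d)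
    (V : Euc d → ℝ) (hV : ContDiff ℝ 2 V)
    (hVbdd : ∃ M : ℝ, ∀ x, |V x| ≤ M)
    (hHess : ∃ C : ℝ, ∀ x, ‖fderiv ℝ (fun y => gradient V y) x‖ ≤ C)
    (X : ℝ → Euc d → Euc d) (hX : IsGlobalFlow (fun y => gradient V y) X) :
    ∀ x : Euc d,
      Tendsto (fun t : ℝ => ‖gradient V (X t x)‖) atTop (nhds 0) ∧
      Tendsto (fun t : ℝ => ‖gradient V (X t x)‖) atBot (nhds 0) := by
  intro x
  obtain ⟨M, hM⟩ := hVbdd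
  obtain ⟨C, hC⟩ := hHess
  exact stmt_7_general (hV.differentiable two_ne_zero)
    (lipschitzWith_gradient_of_norm_fderiv_le hV hC) (hX.2.2 x)
    ⟨M, Set.forall_mem_range.2 fun t => (abs_le.1 (hM (X t x))).2⟩
    ⟨-M, Set.forall_mem_range.2 fun t => (abs_le.1 (hM (X t x))).1⟩
end
end

section
/- Zero variance of the linear flow for one-dimensional Gaussians (Proposition E.8 in dimension one, via the explicit flow of Appendix F.2.1). Let σ ∈ (0,1), ω ∈ ℝ, and let x ∈ ℝ with x ≠ ω/(1−σ). Define X : ℝ → ℝ by X t := e^t · x − (e^t − 1) · ω/(1−σ), which is the flow of the vector field b(y) = y − ω/(1−σ) started at x, with Jacobian factor e^t. Then ∫_ℝ exp(−(X t − ω)²/(2σ²)) · e^t dt = σ · ∫_ℝ exp(−(X t)²/2) · e^t dt, both integrals being finite; i.e. the infinite-time NEIS estimator for target potential U1(y) = (y−ω)²/(2σ²) and normalized Gaussian base density (2π)^{−1/2} exp(−y²/2) equals Z1 = √(2π)·σ for every such x. -/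
/-!
With `c = ω / (1 - σ)` the flow is `X t = c + e ^ t (x - c)`, a homothety about `c`. The affine map
`y ↦ (y - ω) / σ`, which carries the target potential to the base potential, is the homothety about
`c` of ratio `1 / σ`; hence `(X t - ω) / σ = X (t - log σ)`: along the flow it is a time shift. In
dimension `d` the Jacobian factor is `e ^ (d t) = σ ^ d e ^ (d (t - log σ))`, so the target
integrand is `σ ^ d` times a translate of the base integrand, whatever the starting point. The
substitution `r = e ^ t` reduces integrability of the base integrand to that of
`r ^ (d - 1) exp (-b r ^ 2)` on `(0, ∞)`.
-/

open MeasureTheory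

noncomputable section

section LocationScale

open AffineMap Real

variable {E F : Type*} [AddCommGroup E] [Module ℝ E]
  [NormedAddCommGroup F] [NormedSpace ℝ F] {σ : ℝ}

lemma homothety_exp_sub_log (hσ : 0 < σ) (c x : E) (t : ℝ) :
    homothety c (exp (t - log σ)) x = σ⁻¹ • (homothety c (exp t) x - (1 - σ) • c) := by
  rw [exp_sub, exp_log hσ, div_eq_inv_mul, homothety_mul_apply, homothety_apply c σ⁻¹, vsub_eq_sub,
    vadd_eq_add]
  match_scalars <;> field_simp
  ring

lemma exp_mul_eq_rpow_mul_exp_mul_sub_log (hσ : 0 < σ) (d t : ℝ) :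
    exp (d * t) = σ ^ d * exp (d * (t - log σ)) := by
  rw [rpow_def_of_pos hσ, ← exp_add]
  ring_nf

lemma exp_smul_locationScale_homothety_exp (hσ : 0 < σ) (d : ℝ) (f : E → F) (c x : E) (t : ℝ) :
    exp (d * t) • f (σ⁻¹ • (homothety c (exp t) x - (1 - σ) • c)) =
      σ ^ d • exp (d * (t - log σ)) • f (homothety c (exp (t - log σ)) x) := by
  rw [← homothety_exp_sub_log hσ, exp_mul_eq_rpow_mul_exp_mul_sub_log hσ, mul_smul]

lemma integrable_exp_smul_locationScale_homothety_exp (hσ : 0 < σ) {d : ℝ} {f : E → F} {c x : E}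
    (hf : Integrable fun t : ℝ => exp (d * t) • f (homothety c (exp t) x)) :
    Integrable fun t : ℝ => exp (d * t) • f (σ⁻¹ • (homothety c (exp t) x - (1 - σ) • c)) := by
  simp_rw [exp_smul_locationScale_homothety_exp hσ]
  exact (hf.comp_sub_right (log σ)).smul (σ ^ d)

lemma integral_exp_smul_locationScale_homothety_exp (hσ : 0 < σ) (d : ℝ) (f : E → F) (c x : E) :
    ∫ t : ℝ, exp (d * t) • f (σ⁻¹ • (homothety c (exp t) x - (1 - σ) • c)) =
      σ ^ d • ∫ t : ℝ, exp (d * t) • f (homothety c (exp t) x) := by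
  simp_rw [exp_smul_locationScale_homothety_exp hσ]
  rw [integral_smul,
    integral_sub_right_eq_self (fun t => exp (d * t) • f (homothety c (exp t) x)) (log σ)]

end LocationScale

section Gaussian

open AffineMap Real Set

lemma integrable_exp_smul_comp_exp_iff {F : Type*} [NormedAddCommGroup F] [NormedSpace ℝ F]
    {g : ℝ → F} :
    (Integrable fun t : ℝ => exp t • g (exp t)) ↔ IntegrableOn g (Ioi 0) := by
  have h := integrableOn_image_iff_integrableOn_deriv_smul_of_monotoneOn MeasurableSet.univ
    (fun t _ => (hasDerivAt_exp t).hasDerivWithinAt) (exp_monotone.monotoneOn univ) g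
  rw [image_univ, range_exp, integrableOn_univ] at h
  exact h.symm

lemma integrable_exp_mul_mul_exp_neg_mul_exp_sq {b d : ℝ} (hb : 0 < b) (hd : 0 < d) :
    Integrable fun t : ℝ => exp (d * t) * exp (-b * exp t ^ 2) := by
  have h := integrable_exp_smul_comp_exp_iff.2
    (integrableOn_rpow_mul_exp_neg_mul_sq hb (s := d - 1) (by linarith))
  refine h.congr (.of_forall fun t => ?_)
  simp only [smul_eq_mul, ← exp_mul, ← exp_add]
  ring_nf

lemma norm_sq_le_two_mul_norm_add_sq {E : Type*} [SeminormedAddCommGroup E] (u c : E) :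
    ‖u‖ ^ 2 ≤ 2 * (‖u + c‖ ^ 2 + ‖c‖ ^ 2) :=
  calc ‖u‖ ^ 2 ≤ (‖u + c‖ + ‖c‖) ^ 2 := by gcongr; exact norm_le_add_norm_add u c
    _ ≤ 2 * (‖u + c‖ ^ 2 + ‖c‖ ^ 2) := add_sq_le

lemma norm_sq_div_two_mul_sq {E : Type*} [SeminormedAddCommGroup E] [NormedSpace ℝ E]
    (σ : ℝ) (y : E) :
    ‖y‖ ^ 2 / (2 * σ ^ 2) = ‖σ⁻¹ • y‖ ^ 2 / 2 := by
  rw [norm_smul, norm_inv, mul_pow, inv_pow, norm_eq_abs, sq_abs]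
  ring

variable {E : Type*} [NormedAddCommGroup E] [NormedSpace ℝ E] {d : ℝ} {c x : E}

lemma integrable_exp_mul_mul_exp_neg_norm_homothety_sq (hd : 0 < d) (hx : x ≠ c) :
    Integrable fun t : ℝ => exp (d * t) * exp (-(‖homothety c (exp t) x‖ ^ 2 / 2)) := by
  have hb : 0 < ‖x - c‖ ^ 2 / 4 := by have := norm_sub_pos_iff.2 hx; positivity
  refine ((integrable_exp_mul_mul_exp_neg_mul_exp_sq hb hd).const_mul
    (exp (‖c‖ ^ 2 / 2))).mono' ?_ (.of_forall fun t => ?_)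
  · simp only [homothety_apply, vsub_eq_sub, vadd_eq_add]
    exact Continuous.aestronglyMeasurable (by fun_prop)
  · have hbound := norm_sq_le_two_mul_norm_add_sq (exp t • (x - c)) c
    rw [norm_smul, norm_of_nonneg (exp_nonneg t), mul_pow] at hbound
    rw [norm_of_nonneg (by positivity), mul_left_comm, ← exp_add (‖c‖ ^ 2 / 2),
      homothety_apply, vsub_eq_sub, vadd_eq_add]
    gcongr
    linarith

lemma integral_exp_mul_mul_exp_neg_norm_homothety_sq_pos (hd : 0 < d) (hx : x ≠ c) :
    0 < ∫ t : ℝ, exp (d * t) * exp (-(‖homothety c (exp t) x‖ ^ 2 / 2)) := by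
  have hint := integrable_exp_mul_mul_exp_neg_norm_homothety_sq hd hx
  simp_rw [← exp_add] at hint ⊢
  exact integral_exp_pos hint

end Gaussian

lemma integral_exp_neg_add_log_mul {α : Type*} [MeasurableSpace α] (μ : Measure α) {Z : ℝ}
    (hZ : 0 < Z) (U J : α → ℝ) :
    ∫ a, Real.exp (-(U a + Real.log Z)) * J a ∂μ = Z⁻¹ * ∫ a, Real.exp (-U a) * J a ∂μ := by
  rw [← integral_const_mul]
  simp only [neg_add, Real.exp_add, Real.exp_neg (Real.log Z), Real.exp_log hZ, mul_left_comm,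
    mul_comm]

open AffineMap Module in
/-- For the Euclidean norm and `Z₀ = √(2π) ^ finrank ℝ E` the base density is the standard
Gaussian; `exp (finrank ℝ E * t)` is the Jacobian factor because `y ↦ y - c` has divergence
`finrank ℝ E`. -/
theorem stmt_13_general {E : Type*} [NormedAddCommGroup E] [NormedSpace ℝ E]
    [FiniteDimensional ℝ E] {σ Z₀ : ℝ} {ω x : E} (hσ0 : 0 < σ) (hσ1 : σ ≠ 1) (hZ₀ : 0 < Z₀)
    (hx : x ≠ (1 - σ)⁻¹ • ω) {X : ℝ → E}
    (hX : ∀ t, X t = Real.exp t • x - (Real.exp t - 1) • (1 - σ)⁻¹ • ω) :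
    Integrable (fun t : ℝ =>
      Real.exp (-(‖X t - ω‖ ^ 2 / (2 * σ ^ 2))) * Real.exp (finrank ℝ E * t)) ∧
    Integrable (fun t : ℝ => Real.exp (-(‖X t‖ ^ 2 / 2)) * Real.exp (finrank ℝ E * t)) ∧
    (∫ t : ℝ, Real.exp (-(‖X t - ω‖ ^ 2 / (2 * σ ^ 2))) * Real.exp (finrank ℝ E * t)) =
      σ ^ finrank ℝ E * ∫ t : ℝ, Real.exp (-(‖X t‖ ^ 2 / 2)) * Real.exp (finrank ℝ E * t) ∧
    (∫ t : ℝ, Real.exp (-(‖X t - ω‖ ^ 2 / (2 * σ ^ 2))) * Real.exp (finrank ℝ E * t)) /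
        (∫ t : ℝ, Real.exp (-(‖X t‖ ^ 2 / 2 + Real.log Z₀)) * Real.exp (finrank ℝ E * t)) =
      Z₀ * σ ^ finrank ℝ E := by
  set c := (1 - σ)⁻¹ • ω
  have hω : ω = (1 - σ) • c := (smul_inv_smul₀ (sub_ne_zero.2 hσ1.symm) ω).symm
  have hXc (t : ℝ) : X t = homothety c (Real.exp t) x := by
    rw [hX, homothety_apply, vsub_eq_sub, vadd_eq_add]
    module
  have hd : (0 : ℝ) < finrank ℝ E :=
    have : Nontrivial E := ⟨x, c, hx⟩
    Nat.cast_pos.2 finrank_pos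
  have hbase := integrable_exp_mul_mul_exp_neg_norm_homothety_sq hd hx
  have hbase_pos := integral_exp_mul_mul_exp_neg_norm_homothety_sq_pos hd hx
  have htarget := integrable_exp_smul_locationScale_homothety_exp hσ0
    (f := fun y : E => Real.exp (-(‖y‖ ^ 2 / 2))) hbase
  have hintegral := integral_exp_smul_locationScale_homothety_exp hσ0 (finrank ℝ E)
    (fun y : E => Real.exp (-(‖y‖ ^ 2 / 2))) c x
  simp only [← hω, smul_eq_mul, Real.rpow_natCast] at htarget hintegral
  simp_rw [integral_exp_neg_add_log_mul _ hZ₀, norm_sq_div_two_mul_sq σ, hXc,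
    mul_comm _ (Real.exp (finrank ℝ E * _))]
  refine ⟨htarget, hbase, hintegral, ?_⟩
  rw [hintegral]
  field_simp

/-- Zero variance of the linear flow for one-dimensional Gaussians
(Proposition E.8 in dimension one, via the explicit flow of Appendix F.2.1). -/
theorem stmt_13 (σ ω x : ℝ) (hσ0 : 0 < σ) (hσ1 : σ < 1) (hx : x ≠ ω / (1 - σ))
    (X : ℝ → ℝ)
    (hX : ∀ t : ℝ, X t = Real.exp t * x - (Real.exp t - 1) * (ω / (1 - σ))) :
    Integrable (fun t : ℝ => Real.exp (-((X t - ω) ^ 2 / (2 * σ ^ 2))) * Real.exp t) ∧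
    Integrable (fun t : ℝ => Real.exp (-((X t) ^ 2 / 2)) * Real.exp t) ∧
    (∫ t : ℝ, Real.exp (-((X t - ω) ^ 2 / (2 * σ ^ 2))) * Real.exp t) =
      σ * ∫ t : ℝ, Real.exp (-((X t) ^ 2 / 2)) * Real.exp t ∧
    (∫ t : ℝ, Real.exp (-((X t - ω) ^ 2 / (2 * σ ^ 2))) * Real.exp t) /
        (∫ t : ℝ, Real.exp (-((X t) ^ 2 / 2 + Real.log (Real.sqrt (2 * Real.pi)))) *
          Real.exp t) =
      Real.sqrt (2 * Real.pi) * σ := by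
  simpa [div_eq_inv_mul] using stmt_13_general (E := ℝ) hσ0 hσ1.ne
    (Z₀ := √(2 * Real.pi)) (by positivity) (by simpa [div_eq_inv_mul] using hx)
    (by simpa [div_eq_inv_mul] using hX)
end
end

section
/- Radial solution of the Poisson equation with Gaussian source (lemma preceding Proposition E.9). Let d ≥ 2 be an integer and let C ∈ ℝ and σ > 0. Define g : (0,∞) → ℝ by g(r) := C · 2^{d/2−1} · σ^d · r^{1−d} · ∫_0^{r²/(2σ²)} t^{d/2−1} e^{−t} dt (the integral is the lower incomplete gamma function γ(d/2, r²/(2σ²))). Then for every r > 0, g is differentiable at r and g′(r) + ((d−1)/r)·g(r) = C · exp(−r²/(2σ²)). Consequently, any f : (0,∞) → ℝ with f′ = g satisfies f″(r) + ((d−1)/r) f′(r) = C e^{−r²/(2σ²)}, i.e. V(x) := f(‖x−μ‖) solves ΔV = C e^{−‖x−μ‖²/(2σ²)} away from μ. -/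
/-!
In divergence form the equation prescribes the derivative of the radial flux:
`(r ^ (d - 1) * g r)' = C * r ^ (d - 1) * exp (-r² / (2σ²))`. The substitution `t = r² / (2σ²)`
turns the integral of the right-hand side into the constant `C * 2 ^ (d / 2 - 1) * σ ^ d` times an
incomplete gamma function, and dividing by `r ^ (d - 1)` gives `g`.
-/

open MeasureTheory

noncomputable section

/-- The lower incomplete gamma function `γ(a, x)`, through which the radial solution is expressed.
It has its classical meaning for `0 < a` and `0 ≤ x` only: outside this range the integral may
diverge, or involve real powers of negative numbers. -/
def lowerGamma (a x : ℝ) : ℝ :=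
  ∫ t in (0 : ℝ)..x, t ^ (a - 1) * Real.exp (-t)

lemma hasDerivAt_lowerGamma {a x : ℝ} (ha : 0 < a) (hx : 0 < x) :
    HasDerivAt (lowerGamma a) (x ^ (a - 1) * Real.exp (-x)) x := by
  have hint : IntervalIntegrable (fun t : ℝ ↦ t ^ (a - 1) * Real.exp (-t)) volume 0 x :=
    (intervalIntegral.intervalIntegrable_rpow' (by linarith)).mul_continuousOn (by fun_prop)
  have hmeas : Measurable fun t : ℝ ↦ t ^ (a - 1) * Real.exp (-t) := by fun_prop
  have hcont : ContinuousAt (fun t : ℝ ↦ t ^ (a - 1) * Real.exp (-t)) x :=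
    (Real.continuousAt_rpow_const x (a - 1) (Or.inl hx.ne')).mul (by fun_prop)
  exact intervalIntegral.integral_hasDerivAt_right hint
    hmeas.stronglyMeasurable.stronglyMeasurableAtFilter hcont

lemma sq_div_two_mul_sq_rpow_mul {σ r : ℝ} (d : ℝ) (hσ : 0 < σ) (hr : 0 < r) :
    (r ^ 2 / (2 * σ ^ 2)) ^ (d / 2 - 1) * (r / σ ^ 2) =
      r ^ (d - 1) / (2 ^ (d / 2 - 1) * σ ^ d) := by
  have sq_rpow {x : ℝ} (hx : 0 < x) : (x ^ 2) ^ (d / 2 - 1) = x ^ d / x ^ 2 := by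
    rw [← Real.rpow_natCast_mul hx.le, ← Real.rpow_natCast x 2, ← Real.rpow_sub hx]
    congr 1
    push_cast
    ring
  rw [Real.div_rpow (by positivity) (by positivity), Real.mul_rpow zero_le_two (by positivity),
    sq_rpow hr, sq_rpow hσ, Real.rpow_sub_one hr.ne']
  field_simp

lemma hasDerivAt_lowerGamma_sq_div {d σ r : ℝ} (hd : 0 < d) (hσ : 0 < σ) (hr : 0 < r) :
    HasDerivAt (fun s ↦ lowerGamma (d / 2) (s ^ 2 / (2 * σ ^ 2)))
      (r ^ (d - 1) / (2 ^ (d / 2 - 1) * σ ^ d) * Real.exp (-(r ^ 2 / (2 * σ ^ 2)))) r := by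
  have hsq : HasDerivAt (fun s : ℝ ↦ s ^ 2 / (2 * σ ^ 2)) (r / σ ^ 2) r := by
    refine ((hasDerivAt_pow 2 r).div_const (2 * σ ^ 2)).congr_deriv ?_
    push_cast
    field_simp
  have hγ := hasDerivAt_lowerGamma (half_pos hd) (show 0 < r ^ 2 / (2 * σ ^ 2) by positivity)
  refine (hγ.comp r hsq).congr_deriv ?_
  rw [← sq_div_two_mul_sq_rpow_mul d hσ hr]
  ring

lemma hasDerivAt_rpow_one_sub_mul {d h r : ℝ} {F : ℝ → ℝ} (hr : 0 < r)
    (hF : HasDerivAt F (r ^ (d - 1) * h) r) :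
    HasDerivAt (fun s ↦ s ^ (1 - d) * F s) (h - (d - 1) / r * (r ^ (1 - d) * F r)) r := by
  have hpow : HasDerivAt (fun s : ℝ ↦ s ^ (1 - d)) ((1 - d) * (r ^ (1 - d) / r)) r := by
    simpa only [Real.rpow_sub_one hr.ne'] using
      Real.hasDerivAt_rpow_const (p := 1 - d) (Or.inl hr.ne')
  have hcancel : r ^ (1 - d) * r ^ (d - 1) = 1 := by
    rw [← Real.rpow_add hr, sub_add_sub_cancel, sub_self, Real.rpow_zero]
  refine (hpow.mul hF).congr_deriv ?_
  linear_combination h * hcancel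

theorem stmt_15_general {d C σ : ℝ} (hd : 0 < d) (hσ : 0 < σ) {g : ℝ → ℝ}
    (hg : ∀ r, 0 < r → g r =
      C * 2 ^ (d / 2 - 1) * σ ^ d * r ^ (1 - d) * lowerGamma (d / 2) (r ^ 2 / (2 * σ ^ 2)))
    {r : ℝ} (hr : 0 < r) :
    HasDerivAt g (C * Real.exp (-(r ^ 2 / (2 * σ ^ 2))) - (d - 1) / r * g r) r := by
  let flux (s : ℝ) : ℝ :=
    C * 2 ^ (d / 2 - 1) * σ ^ d * lowerGamma (d / 2) (s ^ 2 / (2 * σ ^ 2))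
  have hflux : HasDerivAt flux (r ^ (d - 1) * (C * Real.exp (-(r ^ 2 / (2 * σ ^ 2))))) r := by
    refine ((hasDerivAt_lowerGamma_sq_div hd hσ hr).const_mul _).congr_deriv ?_
    field_simp
  have hg_flux {s : ℝ} (hs : 0 < s) : g s = s ^ (1 - d) * flux s := by
    rw [hg s hs]
    ring
  rw [hg_flux hr]
  exact (hasDerivAt_rpow_one_sub_mul hr hflux).congr_of_eventuallyEq <|
    (eventually_gt_nhds hr).mono fun _ ↦ hg_flux

/-- Radial solution of the Poisson equation with Gaussian source
(lemma preceding Proposition E.9): the derivative identity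
g′(r) = C·exp(−r²/(2σ²)) − ((d−1)/r)·g(r) on (0,∞). -/
theorem stmt_15 (d : ℕ) (hd : 2 ≤ d) (C σ : ℝ) (hσ : 0 < σ)
    (g : ℝ → ℝ)
    (hg : ∀ r : ℝ, g r =
      C * (2 : ℝ) ^ ((d : ℝ) / 2 - 1) * σ ^ d * r ^ (1 - (d : ℝ)) *
        ∫ t in (0:ℝ)..(r ^ 2 / (2 * σ ^ 2)), t ^ ((d : ℝ) / 2 - 1) * Real.exp (-t)) :
    ∀ r : ℝ, 0 < r →
      HasDerivAt g (C * Real.exp (-(r ^ 2 / (2 * σ ^ 2))) - ((d : ℝ) - 1) / r * g r) r := by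
  have hd_pos : (0 : ℝ) < d := by exact_mod_cast two_pos.trans_le hd
  exact fun r ↦ stmt_15_general hd_pos hσ fun s _ ↦ by
    simpa only [lowerGamma, Real.rpow_natCast] using hg s
end
end

section
/- Non-uniqueness of zero-variance dynamics: an explicit planar example (Proposition G.6). On ℝ², define ρ0(x₁,x₂) := (2π)⁻¹ · exp(−(x₁² + x₂²)/2) and ρ1(x₁,x₂) := ρ0(x₁,x₂) + (2π)⁻¹ · x₁ x₂ · exp(−x₁⁴ − x₂⁴). Then: (i) ρ1(x₁,x₂) > 0 for all (x₁,x₂) ∈ ℝ² (indeed (7/16)·ρ0 < ρ1 < (25/16)·ρ0 pointwise); (ii) for every (x₁,x₂) ∈ ℝ², ∫_ℝ ρ1(x₁ + t, x₂) dt = ∫_ℝ ρ0(x₁ + t, x₂) dt; and (iii) for every (x₁,x₂) ∈ ℝ², ∫_ℝ ρ1(x₁, x₂ + t) dt = ∫_ℝ ρ0(x₁, x₂ + t) dt. Hence the two orthogonal constant vector fields e₁ = (1,0) and e₂ = (0,1) are both zero-variance dynamics for the pair (ρ0, ρ1), and neither is a positive scalar multiple of the other. -/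
open MeasureTheory

noncomputable section

open ProbabilityTheory

/-!
With `φ` the standard normal density and `ψ u = (2π)^(-1/2) u exp (-u⁴)`, the two densities are
`ρ0 x y = φ x * φ y` and `ρ1 x y = φ x * φ y + ψ x * ψ y`. Since `|ψ| < (3/4) φ`, the perturbation
is smaller than `(9/16) ρ0`. Since `ψ` is odd and integrable, the perturbation integrates to zero
along every line parallel to a coordinate axis.
-/

section OddPerturbation

variable {G E : Type*} [MeasurableSpace G] [AddGroup G] [MeasurableNeg G]
  [NormedAddCommGroup E] [NormedSpace ℝ E] {μ : Measure G} [μ.IsNegInvariant] {f g : G → E}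

lemma integral_eq_zero_of_odd (hg : g.Odd) : ∫ x, g x ∂μ = 0 := by
  have : IsAddTorsionFree E := .of_isTorsionFree ℝ E
  rw [← self_eq_neg, ← integral_neg, ← integral_neg_eq_self g μ]
  exact integral_congr_ae (ae_of_all _ hg)

lemma integral_translate_add_odd [MeasurableAdd G] [μ.IsAddLeftInvariant]
    (hf : Integrable f μ) (hg : Integrable g μ) (hodd : g.Odd) (x : G) :
    ∫ t, (f (x + t) + g (x + t)) ∂μ = ∫ t, f (x + t) ∂μ := by
  rw [integral_add (hf.comp_add_left x) (hg.comp_add_left x), integral_add_left_eq_self g x,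
    integral_eq_zero_of_odd hodd, add_zero]

end OddPerturbation

lemma abs_mul_lt_mul_mul_mul {R : Type*} [CommRing R] [LinearOrder R] [IsStrictOrderedRing R]
    {a b A B r s : R} (ha : |a| < r * A) (hb : |b| < s * B) : |a * b| < r * s * (A * B) :=
  calc |a * b| = |a| * |b| := abs_mul a b
    _ < r * A * (s * B) := mul_lt_mul'' ha hb (abs_nonneg a) (abs_nonneg b)
    _ = r * s * (A * B) := mul_mul_mul_comm r A s B

lemma gaussianPDFReal_zero_one (u : ℝ) :
    gaussianPDFReal 0 1 u = (√(2 * Real.pi))⁻¹ * Real.exp (-(u ^ 2 / 2)) := by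
  simp [gaussianPDFReal, neg_div]

lemma gaussianPDFReal_zero_one_mul (x y : ℝ) :
    gaussianPDFReal 0 1 x * gaussianPDFReal 0 1 y =
      (2 * Real.pi)⁻¹ * Real.exp (-((x ^ 2 + y ^ 2) / 2)) := by
  rw [gaussianPDFReal_zero_one, gaussianPDFReal_zero_one, mul_mul_mul_comm, ← Real.exp_add,
    ← mul_inv, Real.mul_self_sqrt (by positivity)]
  ring_nf

/-- The function `ψ u = (2π)^(-1/2) u exp (-u⁴)`, so scaled that `ψ x * ψ y` is the perturbation
`ρ1 - ρ0`. -/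
def oddQuarticBump (u : ℝ) : ℝ := (√(2 * Real.pi))⁻¹ * (u * Real.exp (-u ^ 4))

lemma oddQuarticBump_mul (x y : ℝ) :
    oddQuarticBump x * oddQuarticBump y =
      (2 * Real.pi)⁻¹ * (x * y) * Real.exp (-x ^ 4 - y ^ 4) := by
  rw [oddQuarticBump, oddQuarticBump, mul_mul_mul_comm, mul_mul_mul_comm x, ← Real.exp_add,
    ← mul_inv, Real.mul_self_sqrt (by positivity), ← sub_eq_add_neg, ← mul_assoc]

lemma odd_oddQuarticBump : oddQuarticBump.Odd := fun u => by
  simp only [oddQuarticBump, Even.neg_pow (by decide : Even 4), neg_mul, mul_neg]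

lemma abs_lt_quartic (u : ℝ) : |u| < 3 / 4 * (u ^ 4 - u ^ 2 / 2 + 1) := by
  -- The minimum, about 0.017, is at `|u| ≈ 0.81`, so both squares have to be small there.
  have sum_of_squares : 3 / 4 * (|u| ^ 4 - |u| ^ 2 / 2 + 1) - |u| =
      3 / 4 * (|u| ^ 2 - 2 / 3) ^ 2 + 5 / 8 * (|u| - 4 / 5) ^ 2 + 1 / 60 := by ring
  rw [← Even.pow_abs (by decide : Even 4) u, ← sq_abs u, ← sub_pos, sum_of_squares]
  positivity

lemma abs_mul_exp_neg_pow_four_lt (u : ℝ) :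
    |u| * Real.exp (-u ^ 4) < 3 / 4 * Real.exp (-(u ^ 2 / 2)) :=
  calc |u| * Real.exp (-u ^ 4)
    _ < 3 / 4 * (u ^ 4 - u ^ 2 / 2 + 1) * Real.exp (-u ^ 4) := by
      gcongr
      exact abs_lt_quartic u
    _ ≤ 3 / 4 * Real.exp (u ^ 4 - u ^ 2 / 2) * Real.exp (-u ^ 4) := by
      gcongr
      exact Real.add_one_le_exp _
    _ = 3 / 4 * Real.exp (-(u ^ 2 / 2)) := by
      rw [mul_assoc, ← Real.exp_add]
      ring_nf

lemma abs_oddQuarticBump_lt (u : ℝ) : |oddQuarticBump u| < 3 / 4 * gaussianPDFReal 0 1 u := by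
  rw [oddQuarticBump, gaussianPDFReal_zero_one, abs_mul, abs_mul, Real.abs_exp,
    abs_of_nonneg (by positivity : 0 ≤ (√(2 * Real.pi))⁻¹), mul_left_comm (3 / 4)]
  exact mul_lt_mul_of_pos_left (abs_mul_exp_neg_pow_four_lt u) (by positivity)

lemma integrable_oddQuarticBump : Integrable oddQuarticBump := by
  have continuous_oddQuarticBump : Continuous oddQuarticBump := by
    unfold oddQuarticBump
    fun_prop
  exact ((integrable_gaussianPDFReal 0 1).const_mul (3 / 4)).mono'
    continuous_oddQuarticBump.aestronglyMeasurable
    (ae_of_all _ fun u => (abs_oddQuarticBump_lt u).le)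

/-- Non-uniqueness of zero-variance dynamics: an explicit planar example
(Proposition G.6). Both coordinate directions are zero-variance dynamics for
the pair (ρ0, ρ1). -/
theorem stmt_16 (ρ0 ρ1 : ℝ → ℝ → ℝ)
    (hρ0 : ∀ x₁ x₂ : ℝ, ρ0 x₁ x₂ = (2 * Real.pi)⁻¹ * Real.exp (-((x₁ ^ 2 + x₂ ^ 2) / 2)))
    (hρ1 : ∀ x₁ x₂ : ℝ, ρ1 x₁ x₂ =
      ρ0 x₁ x₂ + (2 * Real.pi)⁻¹ * (x₁ * x₂) * Real.exp (-x₁ ^ 4 - x₂ ^ 4)) :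
    (∀ x₁ x₂ : ℝ,
      0 < ρ1 x₁ x₂ ∧
      (7 / 16) * ρ0 x₁ x₂ < ρ1 x₁ x₂ ∧ ρ1 x₁ x₂ < (25 / 16) * ρ0 x₁ x₂) ∧
    (∀ x₁ x₂ : ℝ, (∫ t : ℝ, ρ1 (x₁ + t) x₂) = ∫ t : ℝ, ρ0 (x₁ + t) x₂) ∧
    (∀ x₁ x₂ : ℝ, (∫ t : ℝ, ρ1 x₁ (x₂ + t)) = ∫ t : ℝ, ρ0 x₁ (x₂ + t)) := by
  simp only [← gaussianPDFReal_zero_one_mul] at hρ0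
  simp only [← oddQuarticBump_mul, hρ0] at hρ1
  simp only [hρ0, hρ1]
  have hφ := integrable_gaussianPDFReal 0 1
  have hψ := integrable_oddQuarticBump
  refine ⟨fun x y => ?_, fun x y => ?_, fun x y => ?_⟩
  · have gaussian_pos := mul_pos (gaussianPDFReal_pos 0 1 x one_ne_zero)
      (gaussianPDFReal_pos 0 1 y one_ne_zero)
    obtain ⟨lower, upper⟩ := abs_lt.mp <|
      abs_mul_lt_mul_mul_mul (abs_oddQuarticBump_lt x) (abs_oddQuarticBump_lt y)
    refine ⟨?_, ?_, ?_⟩ <;> linarith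
  · exact integral_translate_add_odd (hφ.mul_const _) (hψ.mul_const _)
      (odd_oddQuarticBump.mul_even (.const (oddQuarticBump y))) x
  · exact integral_translate_add_odd (hφ.const_mul _) (hψ.const_mul _)
      ((Function.Even.const (oddQuarticBump x)).mul_odd odd_oddQuarticBump) y
end
end
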